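/- arXiv:1505.06291 — 2 statements merged into one kernel-verified Lean document; each statement's English description precedes it below -/
import Mathlib

section
/- Let f be a transcendental entire function such that f(γ) is unbounded for every unbounded curve γ. Then every connected component D of the preimage of a bounded simply connected domain B is simply connected; that is, ℂ \ D has no bounded component. -/
open Complex Metric Bornology Topology Filter Set OnePoint

/-- `z₀` is a pole of `f` : `f → ∞` near `z₀`. -/
def IsPole (f : ℂ → ℂ) (z₀ : ℂ) : Prop :=
  Tendsto f (𝓝[≠] z₀) (Bornology.cobounded ℂ)

/-- `f` is a transcendental meromorphic function on `ℂ`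
(meromorphic everywhere and not a rational function). -/
def TranscMero (f : ℂ → ℂ) : Prop :=
  MeromorphicOn f Set.univ ∧
    ¬ ∃ p q : Polynomial ℂ, q ≠ 0 ∧ ∀ z, f z * q.eval z = p.eval z

/-- `f` is a transcendental entire function. -/
def TranscEntire (f : ℂ → ℂ) : Prop :=
  Differentiable ℂ f ∧ ¬ ∃ p : Polynomial ℂ, f = fun z => p.eval z

/-- Preimage under the meromorphic function `f` of the ball `D_r(a)`
(poles, where the `ℂ`-valued representative carries a junk value, are excluded). -/
def preimBall (f : ℂ → ℂ) (a : ℂ) (r : ℝ) : Set ℂ :=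
  {z | ¬ IsPole f z ∧ f z ∈ Metric.ball a r}

/-- Every connected component of `S` is a bounded subset of `ℂ`. -/
def BoundedComponents (S : Set ℂ) : Prop :=
  ∀ z ∈ S, Bornology.IsBounded (connectedComponentIn S z)

/-- `S ⊆ ℂ` is infinitely connected: its complement has infinitely many
connected components. -/
def InfConnected (S : Set ℂ) : Prop :=
  {C : Set ℂ | ∃ z ∈ Sᶜ, C = connectedComponentIn Sᶜ z}.Infinite

/-- `a ∈ ℂ` is a Baker omitted value of the meromorphic function `f`:
`a` is omitted and, for all sufficiently small `r > 0`, every component of the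
boundary of `f⁻¹(D_r(a))` is bounded. -/
def BakerOmittedValue (f : ℂ → ℂ) (a : ℂ) : Prop :=
  (∀ z, ¬ IsPole f z → f z ≠ a) ∧
    ∃ r₀ > 0, ∀ r, 0 < r → r < r₀ →
      BoundedComponents (frontier (preimBall f a r))

/-- `∞` is a Baker omitted value of the entire function `f`: for every large
enough `R`, every component of the boundary of `f⁻¹({|w| > R})` is bounded. -/
def BakerOmittedValueInf (f : ℂ → ℂ) : Prop :=
  ∃ R₀ > 0, ∀ R, R₀ < R → BoundedComponents (frontier {z | R < ‖f z‖})

/-- Baker omitted value at a point of the Riemann sphere `ℂ ∪ {∞}`. -/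
def BakerOmittedValueSph (f : ℂ → ℂ) (v : OnePoint ℂ) : Prop :=
  (v = ∞ ∧ (∀ z, ¬ IsPole f z) ∧ BakerOmittedValueInf f) ∨
    (∃ a : ℂ, v = ↑a ∧ BakerOmittedValue f a)

/-- `b ∈ ℂ` is a (finite) asymptotic value of `f`. -/
def AsympValue (f : ℂ → ℂ) (b : ℂ) : Prop :=
  ∃ γ : ℝ → ℂ, ContinuousOn γ (Set.Ici 0) ∧
    Tendsto γ atTop (Bornology.cobounded ℂ) ∧
    Tendsto (fun t => f (γ t)) atTop (𝓝 b)

/-- `∞` is an asymptotic value of `f`. -/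
def AsympValueInf (f : ℂ → ℂ) : Prop :=
  ∃ γ : ℝ → ℂ, ContinuousOn γ (Set.Ici 0) ∧
    Tendsto γ atTop (Bornology.cobounded ℂ) ∧
    Tendsto (fun t => f (γ t)) atTop (Bornology.cobounded ℂ)

/-- uniform divergence to `∞` of a sequence of functions on `K`. -/
def UnifDiverges (F : ℕ → ℂ → ℂ) (K : Set ℂ) : Prop :=
  ∀ M : ℝ, ∀ᶠ n in atTop, ∀ z ∈ K, M < ‖F n z‖

/-- The iterates of `f` form a normal family on `U`: every subsequence has a
further subsequence converging locally uniformly on `U`, either to a finite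
limit function or to `∞`. -/
def NormalOn (f : ℂ → ℂ) (U : Set ℂ) : Prop :=
  ∀ s : ℕ → ℕ, StrictMono s → ∃ t : ℕ → ℕ, StrictMono t ∧
    ((∃ g : ℂ → ℂ, TendstoLocallyUniformlyOn (fun n => f^[s (t n)]) g atTop U) ∨
      (∀ K ⊆ U, IsCompact K → UnifDiverges (fun n => f^[s (t n)]) K))

/-- The Fatou set of `f`. -/
def FatouSet (f : ℂ → ℂ) : Set ℂ :=
  {z | ∃ U : Set ℂ, IsOpen U ∧ z ∈ U ∧ NormalOn f U}

/-- `U` is a Fatou component of `f`. -/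
def IsFatouComponent (f : ℂ → ℂ) (U : Set ℂ) : Prop :=
  ∃ z ∈ FatouSet f, U = connectedComponentIn (FatouSet f) z

/-- `U` surrounds `0`: `0` lies in a bounded complementary component of `U`. -/
def SurroundsZero (U : Set ℂ) : Prop :=
  0 ∉ U ∧ Bornology.IsBounded (connectedComponentIn Uᶜ 0)

/-- `U` is multiply connected: its complement has a bounded component. -/
def MultiplyConnected (U : Set ℂ) : Prop :=
  ∃ w ∉ U, Bornology.IsBounded (connectedComponentIn Uᶜ w)

/-- `U` is a Baker wandering domain of `f`. -/
def IsBakerWanderingDomain (f : ℂ → ℂ) (U : Set ℂ) : Prop :=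
  ∃ z₀ ∈ FatouSet f, U = connectedComponentIn (FatouSet f) z₀ ∧
    (∀ m n : ℕ, m ≠ n →
      connectedComponentIn (FatouSet f) (f^[m] z₀) ≠
        connectedComponentIn (FatouSet f) (f^[n] z₀)) ∧
    (∃ N : ℕ, ∀ n ≥ N,
      Bornology.IsBounded (connectedComponentIn (FatouSet f) (f^[n] z₀)) ∧
      MultiplyConnected (connectedComponentIn (FatouSet f) (f^[n] z₀)) ∧
      SurroundsZero (connectedComponentIn (FatouSet f) (f^[n] z₀))) ∧
    (∀ z ∈ U, Tendsto (fun n => f^[n] z) atTop (Bornology.cobounded ℂ))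

/-- `U` is a completely invariant set for `f`. -/
def CompletelyInvariant (f : ℂ → ℂ) (U : Set ℂ) : Prop :=
  f '' U ⊆ U ∧ f ⁻¹' U ⊆ U

/-- A nonvanishing continuous function on a simply connected, locally path connected space has a
continuous logarithm. -/
theorem aux_exists_log {A : Type*} [TopologicalSpace A] [SimplyConnectedSpace A]
    [LocallyPathConnectedSpace A] (g : C(A, ℂ)) (hg : ∀ a, g a ≠ 0) :
    ∃ F : C(A, ℂ), ∀ a, Complex.exp (F a) = g a := by
  obtain ⟨a₀⟩ : Nonempty A := inferInstance
  obtain ⟨F, ⟨-, hF⟩, -⟩ := Complex.isCoveringMapOn_exp.existsUnique_continuousMap_lifts g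
    (a₀ := a₀) (e₀ := Complex.log (g a₀)) (Complex.exp_log (hg a₀)) (fun a => hg a)
  exact ⟨F, fun a => congrFun hF a⟩

/-- There is no continuous logarithm of `z - a` on a circle centred at `a`. -/
theorem aux_no_log (a : ℂ) (R : ℝ) (k : C(ℂ, ℂ))
    (hk : ∀ z, dist z a = R → Complex.exp (k z) = z - a) : R ≤ 0 := by
  by_contra! hR
  let c : ℝ → ℂ := fun t => a + R * Complex.exp (t * Complex.I)
  have hc : Continuous c := by fun_prop
  have hcd : ∀ t, Complex.exp (k (c t)) = R * Complex.exp (t * Complex.I) := by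
    intro t
    rw [hk]
    · simp [c]
    · simp [c, dist_eq_norm, Complex.norm_exp_ofReal_mul_I, abs_of_pos hR]
  have key : (fun t : ℝ => k (c t)) = fun t : ℝ => t * Complex.I + k (c 0) := by
    refine Complex.isCoveringMap_exp.eq_of_comp_eq (by fun_prop) (by fun_prop) ?_ 0 (by simp)
    ext t
    simp only [Function.comp_apply]
    rw [hcd, Complex.exp_add, hcd]
    simp
    ring
  have h := congrFun key (2 * Real.pi)
  have h2 : c (2 * Real.pi) = c 0 := by
    simp [c, Complex.exp_two_pi_mul_I]
  simp [h2, Real.pi_ne_zero] at h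

/-- A simply connected open plane set has no holes. -/
theorem aux_no_holes (B : Set ℂ) (hBo : IsOpen B) (hBsc : SimplyConnectedSpace ↥B)
    (U : Set ℂ) (hUo : IsOpen U) (hUb : Bornology.IsBounded U) (hU : frontier U ⊆ B) :
    U ⊆ B := by
  classical
  intro a haU
  by_contra haB
  have := hBo.locallyPathConnectedSpace
  obtain ⟨g, hg⟩ := aux_exists_log (A := B) ⟨fun z => (z : ℂ) - a, by fun_prop⟩
    (fun z h => haB (by
      have h' : (z : ℂ) = a := sub_eq_zero.mp h
      exact h' ▸ z.2))
  obtain ⟨G, hG⟩ := ContinuousMap.exists_restrict_eq (s := frontier U) isClosed_frontier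
    (⟨fun z => g ⟨z, hU z.2⟩, by fun_prop⟩ : C(frontier U, ℂ))
  have hG' : ∀ z ∈ frontier U, Complex.exp (G z) = z - a := by
    intro z hz
    have h1 : G z = g ⟨z, hU hz⟩ := DFunLike.congr_fun hG ⟨z, hz⟩
    rw [h1, hg]; rfl
  have hcont : Continuous (U.piecewise (fun z => Complex.exp (G z)) (fun z => z - a)) :=
    Continuous.piecewise hG' (by fun_prop) (by fun_prop)
  obtain ⟨k, hk⟩ := aux_exists_log ⟨_, hcont⟩ (by
    intro z
    by_cases hz : z ∈ U
    · simp [hz, Complex.exp_ne_zero]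
    · simp only [ContinuousMap.coe_mk, Set.piecewise_eq_of_notMem _ _ _ hz]
      exact fun h => hz (by rw [sub_eq_zero.mp h]; exact haU))
  obtain ⟨R, hR0, hR⟩ := hUb.subset_ball_lt 0 a
  refine absurd (aux_no_log a R k ?_) (not_le.mpr hR0)
  intro z hz
  have hzU : z ∉ U := fun h => (hR h).ne hz
  rw [hk]
  simp [hzU]

/-- A bounded component of a closed set can be isolated by a bounded open set. -/
theorem aux_isolate (K : Set ℂ) (hK : IsClosed K) (w : ℂ) (hw : w ∈ K)
    (hb : Bornology.IsBounded (connectedComponentIn K w)) :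
    ∃ U : Set ℂ, IsOpen U ∧ Bornology.IsBounded U ∧ w ∈ U ∧ frontier U ⊆ Kᶜ := by
  obtain ⟨R, hR⟩ := hb.subset_ball 0
  have hwR : w ∈ ball (0 : ℂ) R := hR (mem_connectedComponentIn hw)
  let K' : Set ℂ := K ∩ closedBall 0 R
  have hK'c : IsCompact K' := (isCompact_closedBall 0 R).inter_left hK
  have : CompactSpace K' := isCompact_iff_compactSpace.mp hK'c
  have hwK' : w ∈ K' := ⟨hw, ball_subset_closedBall hwR⟩
  let x : K' := ⟨w, hwK'⟩
  have hcc : ∀ y ∈ connectedComponent x, (y : ℂ) ∈ ball (0 : ℂ) R := by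
    intro y hy
    apply hR
    have h1 : (Subtype.val '' connectedComponent x : Set ℂ) ⊆ connectedComponentIn K w := by
      apply IsPreconnected.subset_connectedComponentIn
      · exact isPreconnected_connectedComponent.image _ continuous_subtype_val.continuousOn
      · exact ⟨x, mem_connectedComponent, rfl⟩
      · rintro _ ⟨y, -, rfl⟩
        exact y.2.1
    exact h1 ⟨y, hy, rfl⟩
  obtain ⟨Z, hZ, hxZ, hZR⟩ : ∃ Z : Set K', IsClopen Z ∧ x ∈ Z ∧
      ∀ y ∈ Z, (y : ℂ) ∈ ball (0 : ℂ) R := by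
    have hcl : IsClosed {y : K' | (y : ℂ) ∉ ball (0 : ℂ) R} :=
      (isOpen_ball.preimage continuous_subtype_val).isClosed_compl
    have : Nonempty { s : Set K' // IsClopen s ∧ x ∈ s } := ⟨⟨univ, isClopen_univ, mem_univ _⟩⟩
    obtain ⟨⟨Z, hZ⟩, hZe⟩ := hcl.isCompact.elim_directed_family_closed
      (fun s : { s : Set K' // IsClopen s ∧ x ∈ s } => (s : Set K'))
      (fun s => s.2.1.isClosed) (by
        rw [← connectedComponent_eq_iInter_isClopen]
        ext y
        simp only [mem_inter_iff, mem_setOf_eq, mem_empty_iff_false, iff_false, not_and]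
        exact fun h h' => h (hcc y h'))
      (by
        intro s t
        exact ⟨⟨s ∩ t, s.2.1.inter t.2.1, s.2.2, t.2.2⟩, inter_subset_left, inter_subset_right⟩)
    refine ⟨Z, hZ.1, hZ.2, fun y hy => ?_⟩
    by_contra h
    have : y ∈ (∅ : Set K') := hZe ▸ ⟨h, hy⟩
    exact this
  let Z' : Set ℂ := Subtype.val '' Z
  have hZ'c : IsCompact Z' := hZ.isClosed.isCompact.image continuous_subtype_val
  have hWc : IsCompact (Subtype.val '' Zᶜ : Set ℂ) :=
    hZ.compl.isClosed.isCompact.image continuous_subtype_val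
  let T : Set ℂ := (Subtype.val '' Zᶜ) ∪ (K ∩ (ball 0 R)ᶜ)
  have hT : IsClosed T := hWc.isClosed.union (hK.inter isOpen_ball.isClosed_compl)
  have hZT : Z' ⊆ Tᶜ := by
    rintro _ ⟨y, hy, rfl⟩ (⟨y', hy', h⟩ | h)
    · exact hy' (Subtype.ext h ▸ hy)
    · exact h.2 (hZR y hy)
  have hKT : ∀ y ∈ K, y ∈ Z' ∨ y ∈ T := by
    intro y hy
    by_cases hyR : y ∈ ball (0 : ℂ) R
    · have hyK : y ∈ K' := ⟨hy, ball_subset_closedBall hyR⟩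
      by_cases h : (⟨y, hyK⟩ : K') ∈ Z
      · exact Or.inl ⟨_, h, rfl⟩
      · exact Or.inr (Or.inl ⟨_, h, rfl⟩)
    · exact Or.inr (Or.inr ⟨hy, hyR⟩)
  obtain ⟨δ, hδ, hδT⟩ := hZ'c.exists_cthickening_subset_open hT.isOpen_compl hZT
  refine ⟨thickening δ Z', isOpen_thickening, hZ'c.isBounded.thickening,
    self_subset_thickening hδ _ ⟨x, hxZ, rfl⟩, ?_⟩
  intro y hy hyK
  rw [isOpen_thickening.frontier_eq] at hy
  rcases hKT y hyK with h | h
  · exact hy.2 (self_subset_thickening hδ _ h)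
  · exact hδT (closure_thickening_subset_cthickening _ _ hy.1) h

/-- If every unbounded curve has unbounded image under the
transcendental entire function `f`, then every component `D` of the preimage of
a bounded simply connected domain is simply connected: `ℂ \\ D` has no bounded
component. -/
theorem stmt11 (f : ℂ → ℂ) (hf : TranscEntire f)
    (hcurve : ∀ γ : ℝ → ℂ, ContinuousOn γ (Set.Ici 0) → Tendsto γ atTop (Bornology.cobounded ℂ) → ¬ Bornology.IsBounded (f '' (γ '' Set.Ici 0)))
    (B : Set ℂ) (hBo : IsOpen B) (hBb : Bornology.IsBounded B)
    (hBsc : SimplyConnectedSpace ↥B) :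
    ∀ z ∈ f ⁻¹' B, ∀ w ∉ connectedComponentIn (f ⁻¹' B) z,
      ¬ Bornology.IsBounded
        (connectedComponentIn (connectedComponentIn (f ⁻¹' B) z)ᶜ w) := by
  intro z hz w hw hb
  have hfc : Continuous f := hf.1.continuous
  have hopen : IsOpenMap f := by
    rcases AnalyticOnNhd.is_constant_or_isOpenMap
      (fun x _ => hf.1.analyticAt x : AnalyticOnNhd ℂ f univ) with ⟨c, hc⟩ | h
    · exact absurd ⟨Polynomial.C c, by ext x; simp [hc]⟩ hf.2
    · exact h
  have hPo : IsOpen (f ⁻¹' B) := hBo.preimage hfc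
  have hDo : IsOpen (connectedComponentIn (f ⁻¹' B) z) := hPo.connectedComponentIn
  have hDP : connectedComponentIn (f ⁻¹' B) z ⊆ f ⁻¹' B := connectedComponentIn_subset _ _
  obtain ⟨U, hUo, hUb, hwU, hUD⟩ := aux_isolate _ hDo.isClosed_compl w hw hb
  rw [compl_compl] at hUD
  have hcU : IsCompact (closure U) := hUb.isCompact_closure
  have hfU : f '' U ⊆ B := by
    refine aux_no_holes B hBo hBsc _ (hopen U hUo)
      ((hcU.image hfc).isBounded.subset (image_mono subset_closure)) ?_
    intro y hy
    rw [(hopen U hUo).frontier_eq] at hy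
    obtain ⟨u, hu, rfl⟩ :=
      closure_minimal (image_mono subset_closure) (hcU.image hfc).isClosed hy.1
    refine hDP (hUD ?_)
    rw [hUo.frontier_eq]
    exact ⟨hu, fun h => hy.2 ⟨u, h, rfl⟩⟩
  have hclosed : IsClosed (U \ connectedComponentIn (f ⁻¹' B) z) := by
    have h : U \ connectedComponentIn (f ⁻¹' B) z =
        closure U \ connectedComponentIn (f ⁻¹' B) z := by
      refine Subset.antisymm (diff_subset_diff_left subset_closure) ?_
      rintro u ⟨hu, huD⟩
      refine ⟨?_, huD⟩
      by_contra h
      exact huD (hUD (by rw [hUo.frontier_eq]; exact ⟨hu, h⟩))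
    rw [h]
    exact isClosed_closure.sdiff hDo
  have hop : IsOpen (U \ connectedComponentIn (f ⁻¹' B) z) := by
    rw [isOpen_iff_mem_nhds]
    rintro u ⟨hu, huD⟩
    have huP : u ∈ f ⁻¹' B := hfU ⟨u, hu, rfl⟩
    filter_upwards [hUo.mem_nhds hu,
      (hPo.connectedComponentIn (x := u)).mem_nhds (mem_connectedComponentIn huP)] with v hv hv'
    refine ⟨hv, fun hvD => huD ?_⟩
    rw [connectedComponentIn_eq hvD, ← connectedComponentIn_eq hv']
    exact mem_connectedComponentIn huP
  have huniv := IsClopen.eq_univ ⟨hclosed, hop⟩ ⟨w, hwU, hw⟩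
  have hzU : z ∈ U \ connectedComponentIn (f ⁻¹' B) z := huniv ▸ mem_univ z
  exact hzU.2 (mem_connectedComponentIn hz)
end

section
/- A transcendental entire function f has Baker omitted value ∞ if and only if the image under f of every unbounded curve is unbounded. -/
open Complex Metric Bornology Topology Filter Set OnePoint

lemma aux_frontier {T s : Set ℂ} (hT : IsPreconnected T) (h1 : (T ∩ s).Nonempty)
    (h2 : (T ∩ sᶜ).Nonempty) : (T ∩ frontier s).Nonempty := by
  by_contra hcon
  have hno : ∀ z ∈ T, z ∉ frontier s := fun z hz hzf => hcon ⟨z, hz, hzf⟩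
  have hint : ∀ z ∈ T, z ∈ s → z ∈ interior s := fun z hz hzs => by
    by_contra h
    exact hno z hz ⟨subset_closure hzs, h⟩
  have hext : ∀ z ∈ T, z ∉ s → z ∈ (closure s)ᶜ := fun z hz hzs h =>
    hno z hz ⟨h, fun hi => hzs (interior_subset hi)⟩
  obtain ⟨a, haT, ha⟩ := h1
  obtain ⟨b, hbT, hb⟩ := h2
  obtain ⟨z, -, hz1, hz2⟩ := hT (interior s) (closure s)ᶜ isOpen_interior
    isClosed_closure.isOpen_compl
    (fun z hz => by
      by_cases h : z ∈ s
      · exact Or.inl (hint z hz h)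
      · exact Or.inr (hext z hz h))
    ⟨a, haT, hint a haT ha⟩ ⟨b, hbT, hext b hbT hb⟩
  exact hz2 (subset_closure (interior_subset hz1))

lemma aux_const {S : Set ℂ} (hS : IsPreconnected S) {h : ℂ → ℝ} (hc : Continuous h)
    (h1 : ∀ z ∈ S, Circle.exp (h z) = 1) {x y : ℂ} (hx : x ∈ S) (hy : y ∈ S) : h x = h y := by
  refine hS.constant_of_mapsTo (T := (AddSubgroup.zmultiples (2 * Real.pi) : Set ℝ))
    ?_ hc.continuousOn ?_ hx hy
  · rw [isDiscrete_iff_discreteTopology]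
    exact (inferInstance : DiscreteTopology (AddSubgroup.zmultiples (2 * Real.pi)))
  · intro z hz
    obtain ⟨n, hn⟩ := Circle.exp_eq_one.1 (h1 z hz)
    exact ⟨n, by simp [hn]⟩

/-- Unicoherence of the plane, in the form needed. -/
lemma aux_unicoh {U E : Set ℂ} (hU : IsPreconnected U) (hE : IsPreconnected E)
    (hEc : IsClosed E) (hd : Disjoint U E) (hfr : frontier E ⊆ closure U) :
    IsPreconnected (frontier E) := by
  rw [isPreconnected_closed_iff]
  intro t t' ht ht' hsub ⟨p, hp, hpt⟩ ⟨q, hq, hqt⟩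
  by_contra hne
  have hdis : Disjoint (frontier E ∩ t) (frontier E ∩ t') := by
    rw [Set.disjoint_left]
    rintro x ⟨hx, hxt⟩ ⟨_, hxt'⟩
    exact hne ⟨x, hx, hxt, hxt'⟩
  obtain ⟨u, hu0, hu1, -⟩ := exists_continuous_zero_one_of_isClosed
    (isClosed_frontier.inter ht) (isClosed_frontier.inter ht') hdis
  classical
  let g : ℂ → Circle := fun z => if z ∈ E then Circle.exp (Real.pi * u z)
    else Circle.exp (-(Real.pi * u z))
  have hpi : Circle.exp Real.pi = Circle.exp (-Real.pi) :=
    Circle.exp_eq_exp.2 ⟨1, by push_cast; ring⟩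
  have hgc : Continuous g := by
    refine Continuous.if ?_ (by fun_prop) (by fun_prop)
    intro a ha
    change a ∈ frontier E at ha
    rcases hsub ha with h | h
    · have : u a = 0 := hu0 ⟨ha, h⟩
      simp [this]
    · have : u a = 1 := hu1 ⟨ha, h⟩
      rw [this, mul_one, hpi]
  obtain ⟨e, he⟩ : ∃ e, Circle.exp e = g 0 := by
    by_cases h : (0:ℂ) ∈ E
    · exact ⟨Real.pi * u 0, by simp [g, h]⟩
    · exact ⟨-(Real.pi * u 0), by simp [g, h]⟩
  obtain ⟨θ, ⟨-, hθ⟩, -⟩ := Circle.isCoveringMap_exp.existsUnique_continuousMap_lifts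
    (⟨g, hgc⟩ : C(ℂ, Circle)) 0 e he
  have hθ' : ∀ z, Circle.exp (θ z) = g z := fun z => congrFun hθ z
  have hpE : p ∈ E := hEc.frontier_subset hp
  have hqE : q ∈ E := hEc.frontier_subset hq
  have hup : u p = 0 := hu0 ⟨hp, hpt⟩
  have huq : u q = 1 := hu1 ⟨hq, hqt⟩
  have h1 := aux_const hE (h := fun z => θ z - Real.pi * u z) (by fun_prop)
    (fun z hz => by rw [Circle.exp_sub, hθ']; simp [g, hz]) hpE hqE
  have hcl : ∀ z ∈ closure U, Circle.exp (θ z + Real.pi * u z) = 1 := by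
    intro z hz
    have hcl : IsClosed {z | Circle.exp (θ z + Real.pi * u z) = 1} :=
      isClosed_eq (by fun_prop) continuous_const
    refine closure_minimal (fun w hw => ?_) hcl hz
    have hwE : w ∉ E := Set.disjoint_left.1 hd hw
    change Circle.exp (θ w + Real.pi * u w) = 1
    rw [Circle.exp_add, hθ']
    simp [g, hwE]
  have h2 := aux_const hU.closure (h := fun z => θ z + Real.pi * u z) (by fun_prop)
    hcl (hfr hp) (hfr hq)
  simp only [hup, huq] at h1 h2
  have := Real.pi_pos
  linarith

lemma aux_compl_ball (r : ℝ) (hr : 0 < r) : IsPreconnected {z : ℂ | r < ‖z‖} := by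
  have : {z : ℂ | r < ‖z‖} = Complex.exp '' {z | Real.log r < z.re} := by
    ext z
    simp only [Set.mem_ofPred_eq, mem_image]
    constructor
    · intro h
      have hz : z ≠ 0 := by rintro rfl; simp at h; linarith
      exact ⟨Complex.log z, by rw [Complex.log_re]; exact Real.log_lt_log hr h,
        Complex.exp_log hz⟩
    · rintro ⟨w, hw, rfl⟩
      rw [Complex.norm_exp]
      exact (Real.log_lt_iff_lt_exp hr).1 hw
  rw [this]
  exact (convex_halfSpace_re_gt _).isPreconnected.image _ Complex.continuous_exp.continuousOn

lemma aux_forward (f : ℂ → ℂ) (hf : TranscEntire f) (hB : BakerOmittedValueInf f)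
    (γ : ℝ → ℂ) (hγ : ContinuousOn γ (Set.Ici 0))
    (hγt : Tendsto γ atTop (Bornology.cobounded ℂ)) :
    ¬ Bornology.IsBounded (f '' (γ '' Set.Ici 0)) := by
  intro hb
  obtain ⟨hd, hpoly⟩ := hf
  have hnc : ¬ ∃ w, ∀ z, f z = w := by
    rintro ⟨w, hw⟩
    exact hpoly ⟨Polynomial.C w, by ext z; simp [hw]⟩
  have hopen : IsOpenMap f :=
    (AnalyticOnNhd.is_constant_or_isOpenMap (fun z _ => hd.analyticAt z)).resolve_left hnc
  obtain ⟨R₀, hR₀, hB⟩ := hB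
  obtain ⟨M, hM⟩ := hb.exists_norm_le
  set R := max R₀ M + 1 with hR
  have hR0 : R₀ < R := by have := le_max_left R₀ M; linarith
  have hRM : M < R := by have := le_max_right R₀ M; linarith
  have hRpos : 0 < R := hR₀.trans hR0
  have hBR := hB R hR0
  let S : Set ℂ := {z | ‖f z‖ < R}
  have hSo : IsOpen S := isOpen_lt hd.continuous.norm continuous_const
  have hγS : γ '' Ici 0 ⊆ S := fun z hz => (hM _ ⟨z, hz, rfl⟩).trans_lt hRM
  let U := connectedComponentIn S (γ 0)
  have hUo : IsOpen U := hSo.connectedComponentIn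
  have hUp : IsPreconnected U := isPreconnected_connectedComponentIn
  have hUS : U ⊆ S := connectedComponentIn_subset _ _
  have hγU : γ '' Ici 0 ⊆ U :=
    (isPreconnected_Ici.image γ hγ).subset_connectedComponentIn ⟨0, by simp, rfl⟩ hγS
  -- a point with large value
  obtain ⟨w, hw⟩ : ∃ w, R < ‖f w‖ := by
    by_contra hcon
    push Not at hcon
    apply hnc
    refine ⟨f 0, fun z => hd.apply_eq_apply_of_bounded ?_ z 0⟩
    rw [isBounded_iff_forall_norm_le]
    exact ⟨R, by rintro _ ⟨z, rfl⟩; exact hcon z⟩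
  have hwU : w ∈ Uᶜ := fun h => lt_asymm hw (hUS h)
  let E := connectedComponentIn Uᶜ w
  have hwE : w ∈ E := mem_connectedComponentIn hwU
  have hEp : IsPreconnected E := isPreconnected_connectedComponentIn
  have hEU : E ⊆ Uᶜ := connectedComponentIn_subset _ _
  have hEc : IsClosed E := by
    refine isClosed_of_closure_subset ?_
    exact hEp.closure.subset_connectedComponentIn (subset_closure hwE)
      (closure_minimal hEU hUo.isClosed_compl)
  have hdis : Disjoint U E := Set.disjoint_left.2 fun x hx hxE => hEU hxE hx
  have hfr : frontier E ⊆ closure U := by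
    intro x hx
    by_contra hxU
    have hxE : x ∈ E := hEc.frontier_subset hx
    obtain ⟨ε, hε, hball⟩ := Metric.isOpen_iff.1 isClosed_closure.isOpen_compl x hxU
    have hsub : ball x ε ⊆ E := by
      have h1 : ball x ε ⊆ connectedComponentIn Uᶜ x :=
        (convex_ball x ε).isPreconnected.subset_connectedComponentIn (mem_ball_self hε)
          (fun y hy hyU => hball hy (subset_closure hyU))
      rwa [← connectedComponentIn_eq hxE] at h1
    exact hx.2 (mem_interior.2 ⟨ball x ε, hsub, isOpen_ball, mem_ball_self hε⟩)
  have hfrp := aux_unicoh hUp hEp hEc hdis hfr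
  have hfrR : ∀ x ∈ frontier E, ‖f x‖ = R := by
    intro x hx
    have hxU : x ∉ U := hEU (hEc.frontier_subset hx)
    have hle : ‖f x‖ ≤ R := by
      have hcl : IsClosed {z | ‖f z‖ ≤ R} := isClosed_le hd.continuous.norm continuous_const
      exact closure_minimal (fun z hz => (show ‖f z‖ < R from hUS hz).le) hcl (hfr hx)
    refine hle.antisymm (not_lt.1 fun hlt => hxU ?_)
    have hins : IsPreconnected (insert x U) :=
      hUp.subset_closure (subset_insert _ _)
        (insert_subset (hfr hx) subset_closure)
    exact hins.subset_connectedComponentIn (Or.inr (hγU ⟨0, by simp, rfl⟩))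
      (insert_subset hlt hUS) (mem_insert _ _)
  have hfrT : frontier E ⊆ frontier {z | R < ‖f z‖} := by
    intro x hx
    have hTo : IsOpen {z | R < ‖f z‖} := isOpen_lt continuous_const hd.continuous.norm
    rw [hTo.frontier_eq]
    refine ⟨?_, fun h => absurd (hfrR x hx) (ne_of_gt h)⟩
    rw [_root_.mem_closure_iff]
    intro o ho hxo
    have ho' := hopen o ho
    obtain ⟨ε, hε, hball⟩ := Metric.isOpen_iff.1 ho' (f x) ⟨x, hxo, rfl⟩
    have hR' := hfrR x hx
    have hmem : f x * ((1 + ε / (2 * R) : ℝ) : ℂ) ∈ ball (f x) ε := by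
      rw [mem_ball, dist_eq_norm]
      have : f x * ((1 + ε / (2 * R) : ℝ) : ℂ) - f x = f x * ((ε / (2 * R) : ℝ) : ℂ) := by
        push_cast; ring
      rw [this, norm_mul, hR', Complex.norm_real, Real.norm_eq_abs, abs_of_pos (by positivity)]
      field_simp
      linarith
    obtain ⟨y, hyo, hy⟩ := hball hmem
    refine ⟨y, hyo, ?_⟩
    change R < ‖f y‖
    rw [hy, norm_mul, hR', Complex.norm_real, Real.norm_eq_abs, abs_of_pos (by positivity)]
    have : 0 < ε / (2 * R) := by positivity
    nlinarith
  have hfrb : Bornology.IsBounded (frontier E) := by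
    rcases (frontier E).eq_empty_or_nonempty with h | ⟨x, hx⟩
    · rw [h]; exact Bornology.isBounded_empty
    · exact (hBR x (hfrT hx)).subset (hfrp.subset_connectedComponentIn hx hfrT)
  obtain ⟨r, hr, hrb⟩ := hfrb.exists_pos_norm_le
  have hTp := aux_compl_ball r hr
  have hcase : {z : ℂ | r < ‖z‖} ⊆ E ∨ {z : ℂ | r < ‖z‖} ⊆ Eᶜ := by
    by_contra hcon
    push Not at hcon
    obtain ⟨h1, h2⟩ := hcon
    obtain ⟨a, ha, haE⟩ := Set.not_subset.1 h1
    obtain ⟨b, hb, hbE⟩ := Set.not_subset.1 h2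
    obtain ⟨z, hz, hzf⟩ := aux_frontier hTp (s := E)
      ⟨b, hb, not_not.1 hbE⟩ ⟨a, ha, haE⟩
    exact absurd (hrb z hzf) (not_le.2 hz)
  rcases hcase with h | h
  · have hev : ∀ᶠ t in atTop, r < ‖γ t‖ :=
      (tendsto_norm_atTop_iff_cobounded.2 hγt).eventually_gt_atTop r
    obtain ⟨t, ht, ht0⟩ := (hev.and (eventually_ge_atTop 0)).exists
    exact hEU (h ht) (hγU ⟨t, ht0, rfl⟩)
  · have hEb : Bornology.IsBounded E := by
      rw [isBounded_iff_forall_norm_le]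
      exact ⟨r, fun z hz => not_lt.1 fun hlt => h hlt hz⟩
    have := Complex.norm_le_of_forall_mem_frontier_norm_le hEb hd.diffContOnCl
      (fun z hz => (hfrR z hz).le) (subset_closure hwE)
    linarith

/-- One step of the construction of a curve to infinity. -/
lemma aux_step {V C A : Set ℂ} (hV : IsOpen V) (hC : IsClosed C) (hCp : IsPreconnected C)
    (hCV : C ⊆ V) (hAC : A ⊆ C) (hA : ¬ Bornology.IsBounded A) (n : ℝ) :
    ∃ x, ¬ Bornology.IsBounded
      (A ∩ connectedComponentIn (V ∩ {z | n < ‖z‖}) x) := by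
  by_contra hcon
  push Not at hcon
  set W := V ∩ {z : ℂ | n < ‖z‖} with hW
  have hWo : IsOpen W := hV.inter (isOpen_lt continuous_const continuous_norm)
  have hK : IsCompact (C ∩ sphere 0 (n + 1)) := (isCompact_sphere 0 (n + 1)).inter_left hC
  have hnorm : ∀ z ∈ C, n + 1 ≤ ‖z‖ → z ∈ W := fun z hz h =>
    ⟨hCV hz, show n < ‖z‖ by linarith⟩
  obtain ⟨t, ht⟩ := hK.elim_finite_subcover (fun x : ℂ => connectedComponentIn W x)
    (fun x => hWo.connectedComponentIn)
    (fun z hz => mem_iUnion.2 ⟨z, mem_connectedComponentIn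
      (hnorm z hz.1 (by have := hz.2; rw [mem_sphere_zero_iff_norm] at this; linarith))⟩)
  apply hA
  have hfin : Bornology.IsBounded (closedBall (0:ℂ) (n + 1) ∪
      ⋃ x ∈ t, A ∩ connectedComponentIn W x) := by
    refine isBounded_closedBall.union ?_
    rw [isBounded_biUnion_finset]
    exact fun x _ => hcon x
  refine hfin.subset fun a ha => ?_
  by_cases han : ‖a‖ ≤ n + 1
  · exact Or.inl (by simpa using han)
  right
  push Not at han
  have haC := hAC ha
  have haW := hnorm a haC han.le
  set D := connectedComponentIn W a with hD
  have haD : a ∈ D := mem_connectedComponentIn haW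
  have hDo : IsOpen D := hWo.connectedComponentIn
  -- `D` meets the sphere
  obtain ⟨y, hyC, hyD, hyn⟩ : ∃ y ∈ C, y ∈ D ∧ ‖y‖ = n + 1 := by
    by_contra hno
    push Not at hno
    let O := D ∩ {z : ℂ | n + 1 < ‖z‖}
    have hOo : IsOpen O := hDo.inter (isOpen_lt continuous_const continuous_norm)
    have hCO : C ⊆ O := by
      by_contra hnot
      obtain ⟨b, hbC, hbO⟩ := Set.not_subset.1 hnot
      obtain ⟨z, hzC, hzf⟩ := aux_frontier hCp (s := O)
        ⟨a, haC, haD, han⟩ ⟨b, hbC, hbO⟩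
      rw [hOo.frontier_eq] at hzf
      have hzn : n + 1 ≤ ‖z‖ := by
        have hcl : IsClosed {z : ℂ | n + 1 ≤ ‖z‖} := isClosed_le continuous_const continuous_norm
        exact closure_minimal (fun w hw => (show n + 1 < ‖w‖ from hw.2).le) hcl hzf.1
      have hzW := hnorm z hzC hzn
      have hins : IsPreconnected (insert z D) :=
        isPreconnected_connectedComponentIn.subset_closure (subset_insert _ _)
          (insert_subset (closure_mono inter_subset_left hzf.1) subset_closure)
      have hzD : z ∈ D := hins.subset_connectedComponentIn (Or.inr haD)
        (insert_subset hzW (connectedComponentIn_subset _ _)) (mem_insert _ _)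
      exact hzf.2 ⟨hzD, lt_of_le_of_ne hzn (hno z hzC hzD).symm⟩
    apply hA
    refine (hcon a).subset fun z hz => ⟨hz, (hCO (hAC hz)).1⟩
  obtain ⟨x, hx, hyx⟩ := mem_iUnion₂.1 (ht ⟨hyC, by simpa using hyn⟩)
  refine mem_iUnion₂.2 ⟨x, hx, ha, ?_⟩
  rw [connectedComponentIn_eq hyx, ← connectedComponentIn_eq hyD]
  exact haD

/-- Infinite concatenation of paths. -/
lemma aux_concat (x : ℕ → ℂ) (D : ℕ → Set ℂ) (h : ∀ k, JoinedIn (D k) (x k) (x (k + 1))) :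
    ∃ γ : ℝ → ℂ, Continuous γ ∧ ∀ t, 0 ≤ t → γ t ∈ D ⌊t⌋₊ := by
  let p : ∀ k, Path (x k) (x (k + 1)) := fun k => (h k).somePath
  let q : ℕ → ℝ → ℂ := fun k t => (p k).extend (t - k)
  let γ : ℝ → ℂ := fun t => q ⌊t⌋₊ t
  have hγk : ∀ k : ℕ, ContinuousOn γ (Icc (k : ℝ) (k + 1)) := by
    intro k
    have hc : ContinuousOn (fun t : ℝ => (p k).extend (t - k)) (Icc (k : ℝ) (k + 1)) :=
      ((p k).continuous_extend.comp (by fun_prop)).continuousOn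
    refine hc.congr fun t ht => ?_
    rcases ht.2.lt_or_eq with hlt | heq
    · have : ⌊t⌋₊ = k := (Nat.floor_eq_iff (k.cast_nonneg.trans ht.1)).2 ⟨ht.1, hlt⟩
      change q ⌊t⌋₊ t = q k t
      rw [this]
    · have : ⌊t⌋₊ = k + 1 := by
        rw [heq]; exact_mod_cast Nat.floor_natCast (R := ℝ) (k + 1)
      change q ⌊t⌋₊ t = q k t
      rw [this, heq]
      simp [q]
  have hγn : ∀ n : ℕ, ContinuousOn γ (Iic (n : ℝ)) := by
    intro n
    induction n with
    | zero =>
      refine (continuousOn_const (c := x 0)).congr fun t ht => ?_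
      have ht' : t ≤ 0 := by simpa using ht
      have : ⌊t⌋₊ = 0 := Nat.floor_of_nonpos ht'
      change q ⌊t⌋₊ t = x 0
      rw [this]
      exact (p 0).extend_of_le_zero (by simpa using ht')
    | succ n ih =>
      have := ih.union_of_isClosed (hγk n) isClosed_Iic isClosed_Icc
      rw [Iic_union_Icc_eq_Iic (by linarith)] at this
      exact_mod_cast this
  refine ⟨γ, ?_, ?_⟩
  · rw [continuous_iff_continuousAt]
    intro t
    obtain ⟨n, hn⟩ := exists_nat_gt t
    exact (hγn n).continuousAt (Iic_mem_nhds hn)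
  · intro t ht
    have h1 : t - ⌊t⌋₊ ∈ Icc (0:ℝ) 1 :=
      ⟨by linarith [Nat.floor_le ht], by linarith [Nat.lt_floor_add_one t]⟩
    change (p ⌊t⌋₊).extend _ ∈ _
    rw [Path.extend_apply _ h1]
    exact (h ⌊t⌋₊).somePath_mem _

lemma aux_curve {V C : Set ℂ} (hV : IsOpen V) (hC : IsClosed C) (hCp : IsPreconnected C)
    (hCV : C ⊆ V) (hCu : ¬ Bornology.IsBounded C) :
    ∃ γ : ℝ → ℂ, Continuous γ ∧ Tendsto γ atTop (Bornology.cobounded ℂ) ∧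
      ∀ t, 0 ≤ t → γ t ∈ V := by
  let X := {A : Set ℂ // A ⊆ C ∧ ¬ Bornology.IsBounded A}
  have step : ∀ (n : ℕ) (A : X), ∃ y, ¬ Bornology.IsBounded
      (A.1 ∩ connectedComponentIn (V ∩ {z | (n : ℝ) < ‖z‖}) y) := fun n A =>
    aux_step hV hC hCp hCV A.2.1 A.2.2 n
  choose y hy using step
  let A : ℕ → X := fun n => Nat.rec ⟨C, Subset.rfl, hCu⟩
    (fun n A => ⟨A.1 ∩ connectedComponentIn (V ∩ {z | (n : ℝ) < ‖z‖}) (y n A),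
      inter_subset_left.trans A.2.1, hy n A⟩) n
  let D : ℕ → Set ℂ := fun n => connectedComponentIn (V ∩ {z | (n : ℝ) < ‖z‖}) (y n (A n))
  have hA : ∀ n, (A (n + 1)).1 = (A n).1 ∩ D n := fun n => rfl
  have hne : ∀ n, (A (n + 1)).1.Nonempty := fun n => by
    by_contra hemp
    rw [Set.not_nonempty_iff_eq_empty] at hemp
    exact (A (n + 1)).2.2 (hemp ▸ Bornology.isBounded_empty)
  choose x hx using hne
  have hDsub : ∀ n, D n ⊆ V ∩ {z | (n : ℝ) < ‖z‖} := fun n => connectedComponentIn_subset _ _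
  have hjoin : ∀ k, JoinedIn (D k) (x k) (x (k + 1)) := by
    intro k
    have h1 : x k ∈ D k := (hA k ▸ hx k).2
    have h2 : x (k + 1) ∈ D k := by
      have h3 : x (k + 1) ∈ (A (k + 1)).1 := ((hA (k + 1)) ▸ hx (k + 1)).1
      exact (hA k ▸ h3).2
    have hDo : IsOpen (D k) :=
      (hV.inter (isOpen_lt continuous_const continuous_norm)).connectedComponentIn
    have hDc : IsConnected (D k) := ⟨⟨_, h1⟩, isPreconnected_connectedComponentIn⟩
    exact (hDo.isConnected_iff_isPathConnected.1 hDc).joinedIn _ h1 _ h2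
  obtain ⟨γ, hγ, hγD⟩ := aux_concat x D hjoin
  refine ⟨γ, hγ, ?_, fun t ht => (hDsub _ (hγD t ht)).1⟩
  rw [← tendsto_norm_atTop_iff_cobounded]
  refine tendsto_atTop_mono' atTop ?_ (tendsto_natCast_atTop_atTop.comp tendsto_nat_floor_atTop)
  filter_upwards [eventually_ge_atTop (0:ℝ)] with t ht
  exact (show ((⌊t⌋₊ : ℕ) : ℝ) < ‖γ t‖ from (hDsub _ (hγD t ht)).2).le

lemma aux_backward (f : ℂ → ℂ) (hf : Continuous f)
    (h : ∀ γ : ℝ → ℂ, ContinuousOn γ (Set.Ici 0) → Tendsto γ atTop (Bornology.cobounded ℂ) →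
      ¬ Bornology.IsBounded (f '' (γ '' Set.Ici 0))) : BakerOmittedValueInf f := by
  refine ⟨1, one_pos, fun R _ z hz => ?_⟩
  by_contra hub
  set F := frontier {z | R < ‖f z‖} with hF
  set C := connectedComponentIn F z with hCdef
  have hCp : IsPreconnected C := isPreconnected_connectedComponentIn
  have hzC : z ∈ C := mem_connectedComponentIn hz
  have hCF : C ⊆ F := connectedComponentIn_subset _ _
  have hCc : IsClosed C := isClosed_of_closure_subset
    (hCp.closure.subset_connectedComponentIn (subset_closure hzC)
      (closure_minimal hCF isClosed_frontier))
  have hCV : C ⊆ {z | ‖f z‖ < R + 1} := fun w hw => by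
    have h1 := frontier_lt_subset_eq continuous_const hf.norm (hCF hw)
    have h2 : R = ‖f w‖ := h1
    change ‖f w‖ < R + 1
    linarith
  obtain ⟨γ, hγ, hγt, hγV⟩ := aux_curve (isOpen_lt hf.norm continuous_const) hCc hCp hCV hub
  refine h γ hγ.continuousOn hγt ?_
  rw [isBounded_iff_forall_norm_le]
  refine ⟨R + 1, ?_⟩
  rintro _ ⟨_, ⟨t, ht, rfl⟩, rfl⟩
  exact (show ‖f (γ t)‖ < R + 1 from hγV t ht).le

/-- A transcendental entire function `f` has Baker omitted value
`∞` if and only if the image under `f` of every unbounded curve is unbounded. -/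
theorem stmt12 (f : ℂ → ℂ) (hf : TranscEntire f) :
    BakerOmittedValueInf f ↔
      (∀ γ : ℝ → ℂ, ContinuousOn γ (Set.Ici 0) → Tendsto γ atTop (Bornology.cobounded ℂ) → ¬ Bornology.IsBounded (f '' (γ '' Set.Ici 0))) := by
  exact ⟨fun hB γ h1 h2 => aux_forward f hf hB γ h1 h2, aux_backward f hf.1.continuous⟩
end
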